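/- Let β̂ be the elastic-net estimator, let β* ∈ ℝ^p with support H = {j : β*_j ≠ 0}, set z* = ‖ℓ̇(β*) + 2λ₂·β*‖_∞ and Δ = β̂ − β*. If z* ≤ ((ζ−1)/(ζ+1))·λ₁ for some ζ > 1, then (2λ₁/(ζ+1))·‖Δ_{H^c}‖₁ ≤ Δᵀ·[ℓ̇(β̂) − ℓ̇(β*) + 2λ₂·Δ] + (2λ₁/(ζ+1))·‖Δ_{H^c}‖₁ ≤ (2ζλ₁/(ζ+1))·‖Δ_H‖₁; in particular, ‖Δ_{H^c}‖₁ ≤ ζ·‖Δ_H‖₁. -/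

import Mathlib

open Real BigOperators Finset MeasureTheory

/-- Inner product of a row of the design matrix with a coefficient vector. -/
def dotp {p : ℕ} (u v : Fin p → ℝ) : ℝ := ∑ j, u j * v j

/-- Average negative binomial negative log-likelihood. -/
noncomputable def negLogLik (n p : ℕ) (θ : ℝ) (x : Fin n → Fin p → ℝ)
    (y : Fin n → ℝ) (β : Fin p → ℝ) : ℝ :=
  -(1 / (n : ℝ)) *
    ∑ i, (y i * dotp (x i) β - (θ + y i) * Real.log (θ + Real.exp (dotp (x i) β)))

/-- Elastic-net objective function. -/
noncomputable def enObj (n p : ℕ) (θ : ℝ) (x : Fin n → Fin p → ℝ) (y : Fin n → ℝ)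
    (lam1 lam2 : ℝ) (β : Fin p → ℝ) : ℝ :=
  negLogLik n p θ x y β + lam1 * ∑ j, |β j| + lam2 * ∑ j, (β j) ^ 2

/-- `j`-th component of the gradient of the average negative log-likelihood. -/
noncomputable def gradComp (n p : ℕ) (θ : ℝ) (x : Fin n → Fin p → ℝ) (y : Fin n → ℝ)
    (β : Fin p → ℝ) (j : Fin p) : ℝ :=
  (1 / (n : ℝ)) *
    ∑ i, x i j * θ * (Real.exp (dotp (x i) β) - y i) / (θ + Real.exp (dotp (x i) β))



lemma deriv_nonneg_of_right_min (f : ℝ → ℝ) (f' : ℝ) (hf : HasDerivAt f f' 0)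
    (h : ∀ t, 0 < t → t < 1 → f 0 ≤ f t) : 0 ≤ f' := by
  have h1 := hf.tendsto_slope_zero_right
  refine ge_of_tendsto h1 ?_
  have h2 : ∀ᶠ t in nhdsWithin (0:ℝ) (Set.Ioi 0), t ∈ Set.Ioo (0:ℝ) 1 :=
    Ioo_mem_nhdsGT one_pos
  filter_upwards [h2] with t ht
  have := h t ht.1 ht.2
  simp only [zero_add, smul_eq_mul]
  exact mul_nonneg (inv_nonneg.mpr ht.1.le) (by linarith)

lemma dotp_line {p : ℕ} (u b d : Fin p → ℝ) (t : ℝ) :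
    dotp u (fun j => b j - t * d j) = dotp u b - t * dotp u d := by
  unfold dotp
  rw [Finset.mul_sum, ← Finset.sum_sub_distrib]
  exact Finset.sum_congr rfl fun j _ => by ring

lemma sum_grad (n p : ℕ) (θ : ℝ) (x : Fin n → Fin p → ℝ) (y : Fin n → ℝ)
    (β d : Fin p → ℝ) :
    ∑ j, d j * gradComp n p θ x y β j = (1 / (n : ℝ)) *
      ∑ i, dotp (x i) d * (θ * (Real.exp (dotp (x i) β) - y i) /
        (θ + Real.exp (dotp (x i) β))) := by
  have e : ∀ i, dotp (x i) d * (θ * (Real.exp (dotp (x i) β) - y i) /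
        (θ + Real.exp (dotp (x i) β))) = ∑ j, d j * (x i j * θ *
        (Real.exp (dotp (x i) β) - y i) / (θ + Real.exp (dotp (x i) β))) := by
    intro i
    rw [show dotp (x i) d = ∑ j, x i j * d j from rfl, Finset.sum_mul]
    exact Finset.sum_congr rfl fun j _ => by ring
  simp_rw [e]
  rw [Finset.sum_comm, Finset.mul_sum]
  refine Finset.sum_congr rfl fun j _ => ?_
  rw [gradComp, ← Finset.mul_sum]
  ring

lemma hasDeriv_line (n p : ℕ) (θ : ℝ) (hθ : 0 < θ) (x : Fin n → Fin p → ℝ) (y : Fin n → ℝ)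
    (β d : Fin p → ℝ) :
    HasDerivAt (fun t : ℝ => negLogLik n p θ x y (fun j => β j - t * d j))
      (-∑ j, d j * gradComp n p θ x y β j) 0 := by
  rw [sum_grad]
  unfold negLogLik
  simp_rw [dotp_line]
  have key : ∀ i ∈ (Finset.univ : Finset (Fin n)), HasDerivAt (fun t : ℝ =>
      y i * (dotp (x i) β - t * dotp (x i) d) - (θ + y i) *
        Real.log (θ + Real.exp (dotp (x i) β - t * dotp (x i) d)))
      (dotp (x i) d * (θ * (Real.exp (dotp (x i) β) - y i) /
        (θ + Real.exp (dotp (x i) β)))) 0 := by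
    intro i _
    have hl : HasDerivAt (fun t : ℝ => dotp (x i) β - t * dotp (x i) d)
        (-(1 * dotp (x i) d)) 0 :=
      ((hasDerivAt_id (0:ℝ)).mul_const (dotp (x i) d)).const_sub (dotp (x i) β)
    have hpos : 0 < θ + Real.exp (dotp (x i) β) := by positivity
    have hne : θ + Real.exp (dotp (x i) β - 0 * dotp (x i) d) ≠ 0 := by positivity
    have := (hl.const_mul (y i)).sub (((hl.exp.const_add θ).log hne).const_mul (θ + y i))
    refine this.congr_deriv ?_
    simp only [zero_mul, sub_zero]
    field_simp
    ring
  have := (HasDerivAt.fun_sum key).const_mul (-(1 / (n : ℝ)))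
  exact this.congr_deriv (by ring)

lemma scal_mono (θ y a b : ℝ) (hθ : 0 < θ) (hy : 0 ≤ y) :
    0 ≤ (a - b) * (θ * (Real.exp a - y) / (θ + Real.exp a)
      - θ * (Real.exp b - y) / (θ + Real.exp b)) := by
  have ha := Real.exp_pos a
  have hb := Real.exp_pos b
  have e : θ * (Real.exp a - y) / (θ + Real.exp a)
      - θ * (Real.exp b - y) / (θ + Real.exp b) =
      (θ * (θ + y) / ((θ + Real.exp a) * (θ + Real.exp b))) * (Real.exp a - Real.exp b) := by
    field_simp
    ring
  have h : 0 ≤ (a - b) * (Real.exp a - Real.exp b) := by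
    rcases le_total a b with h | h
    · exact mul_nonneg_of_nonpos_of_nonpos (by linarith) (by linarith [Real.exp_le_exp.mpr h])
    · exact mul_nonneg (by linarith) (by linarith [Real.exp_le_exp.mpr h])
  rw [e]
  have h2 : 0 ≤ θ * (θ + y) / ((θ + Real.exp a) * (θ + Real.exp b)) := by positivity
  nlinarith [mul_nonneg h2 h]

theorem stmt3
    (n p : ℕ) (hn : 1 ≤ n) (hp : 1 ≤ p)
    (θ : ℝ) (hθ : 0 < θ)
    (x : Fin n → Fin p → ℝ) (y : Fin n → ℝ) (hy : ∀ i, 0 ≤ y i)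
    (lam1 lam2 : ℝ) (hlam1 : 0 < lam1) (hlam2 : 0 < lam2)
    (betah : Fin p → ℝ)
    (hmin : ∀ β : Fin p → ℝ,
      enObj n p θ x y lam1 lam2 betah ≤ enObj n p θ x y lam1 lam2 β)
    (betas : Fin p → ℝ)
    (H : Finset (Fin p)) (hH : H = Finset.univ.filter (fun j => betas j ≠ 0))
    (zstar : ℝ)
    (hz : zstar = ⨆ j : Fin p, |gradComp n p θ x y betas j + 2 * lam2 * betas j|)
    (Δ : Fin p → ℝ) (hΔ : Δ = fun j => betah j - betas j)
    (ζ : ℝ) (hζ : 1 < ζ)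
    (hzs : zstar ≤ (ζ - 1) / (ζ + 1) * lam1) :
    ((2 * lam1 / (ζ + 1)) * (∑ j ∈ Hᶜ, |Δ j|) ≤
        (∑ j, Δ j * (gradComp n p θ x y betah j - gradComp n p θ x y betas j
            + 2 * lam2 * Δ j))
          + (2 * lam1 / (ζ + 1)) * (∑ j ∈ Hᶜ, |Δ j|) ∧
      (∑ j, Δ j * (gradComp n p θ x y betah j - gradComp n p θ x y betas j
            + 2 * lam2 * Δ j))
          + (2 * lam1 / (ζ + 1)) * (∑ j ∈ Hᶜ, |Δ j|)
        ≤ (2 * ζ * lam1 / (ζ + 1)) * (∑ j ∈ H, |Δ j|)) ∧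
    (∑ j ∈ Hᶜ, |Δ j|) ≤ ζ * (∑ j ∈ H, |Δ j|) := by
  have hdot : ∀ i, dotp (x i) Δ = dotp (x i) betah - dotp (x i) betas := by
    intro i
    simp only [dotp, hΔ, mul_sub, Finset.sum_sub_distrib]
  set S := ∑ j, Δ j * (gradComp n p θ x y betah j - gradComp n p θ x y betas j
            + 2 * lam2 * Δ j) with hS
  set A := ∑ j ∈ H, |Δ j| with hA
  set B := ∑ j ∈ Hᶜ, |Δ j| with hB
  have hS1 : S = ∑ j, Δ j * gradComp n p θ x y betah j
      - ∑ j, Δ j * gradComp n p θ x y betas j + 2 * lam2 * ∑ j, Δ j ^ 2 := by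
    rw [hS, Finset.mul_sum, ← Finset.sum_sub_distrib, ← Finset.sum_add_distrib]
    exact Finset.sum_congr rfl fun j _ => by ring
  have hS0 : 0 ≤ S := by
    rw [hS1, sum_grad, sum_grad, ← mul_sub, ← Finset.sum_sub_distrib]
    refine add_nonneg (mul_nonneg (by positivity) (Finset.sum_nonneg fun i _ => ?_))
      (mul_nonneg (by positivity) (Finset.sum_nonneg fun i _ => sq_nonneg _))
    rw [← mul_sub, hdot]
    exact scal_mono _ _ _ _ hθ (hy i)
  -- first-order condition
  have hfo : 0 ≤ -(∑ j, Δ j * gradComp n p θ x y betah j)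
      + lam1 * (∑ j, |betas j| - ∑ j, |betah j|)
      + lam2 * ∑ j, (-(2 * betah j * Δ j)) := by
    refine deriv_nonneg_of_right_min (fun t : ℝ =>
      negLogLik n p θ x y (fun j => betah j - t * Δ j)
      + lam1 * (∑ j, |betah j| + t * (∑ j, |betas j| - ∑ j, |betah j|))
      + lam2 * ∑ j, (betah j - t * Δ j) ^ 2) _ ?_ ?_
    · have h2 : HasDerivAt (fun t : ℝ =>
          lam1 * (∑ j, |betah j| + t * (∑ j, |betas j| - ∑ j, |betah j|)))
          (lam1 * (∑ j, |betas j| - ∑ j, |betah j|)) 0 := by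
        have := ((((hasDerivAt_id (0:ℝ)).mul_const
          (∑ j, |betas j| - ∑ j, |betah j|)).const_add (∑ j, |betah j|)).const_mul lam1)
        exact this.congr_deriv (by ring)
      have h3 : ∀ j ∈ (Finset.univ : Finset (Fin p)), HasDerivAt
          (fun t : ℝ => (betah j - t * Δ j) ^ 2) (-(2 * betah j * Δ j)) 0 := by
        intro j _
        have := (((hasDerivAt_id (0:ℝ)).mul_const (Δ j)).const_sub (betah j)).pow 2
        exact this.congr_deriv (by simp)
      exact ((hasDeriv_line n p θ hθ x y betah Δ).add h2).add
        ((HasDerivAt.fun_sum h3).const_mul lam2)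
    · intro t ht0 ht1
      have hm := hmin (fun j => betah j - t * Δ j)
      have habs : ∑ j, |betah j - t * Δ j| ≤
          ∑ j, |betah j| + t * (∑ j, |betas j| - ∑ j, |betah j|) := by
        rw [← Finset.sum_sub_distrib, Finset.mul_sum, ← Finset.sum_add_distrib]
        refine Finset.sum_le_sum fun j _ => ?_
        have e : betah j - t * Δ j = (1 - t) * betah j + t * betas j := by
          rw [hΔ]; ring
        rw [e]
        refine (abs_add_le _ _).trans ?_
        rw [abs_mul, abs_mul, abs_of_pos ht0, abs_of_pos (by linarith : 0 < 1 - t)]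
        linarith
      have := mul_le_mul_of_nonneg_left habs hlam1.le
      simp only [enObj] at hm
      simp only [zero_mul, sub_zero, add_zero]
      linarith
  have hzj : ∀ j, |gradComp n p θ x y betas j + 2 * lam2 * betas j|
      ≤ (ζ - 1) / (ζ + 1) * lam1 := fun j =>
    (le_ciSup (f := fun j => |gradComp n p θ x y betas j + 2 * lam2 * betas j|)
      (Set.finite_range _).bddAbove j).trans (hz ▸ hzs)
  have hAB : ∑ j, |Δ j| = A + B := (Finset.sum_add_sum_compl H _).symm
  have hgs : -(∑ j, Δ j * (gradComp n p θ x y betas j + 2 * lam2 * betas j))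
      ≤ (ζ - 1) / (ζ + 1) * lam1 * (A + B) := by
    rw [← hAB, Finset.mul_sum, ← Finset.sum_neg_distrib]
    refine Finset.sum_le_sum fun j _ => ?_
    refine (neg_le_abs _).trans ?_
    rw [abs_mul, mul_comm]
    exact mul_le_mul_of_nonneg_right (hzj j) (abs_nonneg _)
  have hl1 : ∑ j, |betas j| - ∑ j, |betah j| ≤ A - B := by
    rw [← Finset.sum_sub_distrib, ← Finset.sum_add_sum_compl H, sub_eq_add_neg A B, hA, hB,
      ← Finset.sum_neg_distrib]
    refine add_le_add (Finset.sum_le_sum fun j _ => ?_) (Finset.sum_le_sum fun j hj => ?_)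
    · rw [hΔ, abs_sub_comm (betah j)]
      exact abs_sub_abs_le_abs_sub _ _
    · have : betas j = 0 := by
        simpa [hH] using hj
      simp [hΔ, this]
  have hSeq : S = (∑ j, Δ j * gradComp n p θ x y betah j
      - lam2 * ∑ j, (-(2 * betah j * Δ j)))
      - ∑ j, Δ j * (gradComp n p θ x y betas j + 2 * lam2 * betas j) := by
    rw [hS, Finset.mul_sum, ← Finset.sum_sub_distrib, ← Finset.sum_sub_distrib]
    refine Finset.sum_congr rfl fun j _ => ?_
    rw [hΔ]; ring
  have hl1' := mul_le_mul_of_nonneg_left hl1 hlam1.le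
  have hz1 : 0 < ζ + 1 := by linarith
  have e1 : 2 * lam1 / (ζ + 1) = lam1 - (ζ - 1) / (ζ + 1) * lam1 := by
    field_simp; ring
  have e2 : 2 * ζ * lam1 / (ζ + 1) = lam1 + (ζ - 1) / (ζ + 1) * lam1 := by
    field_simp; ring
  have hup : S + (2 * lam1 / (ζ + 1)) * B ≤ (2 * ζ * lam1 / (ζ + 1)) * A := by
    rw [e1, e2]
    linarith
  refine ⟨⟨by linarith, hup⟩, ?_⟩
  have h3 : (2 * lam1 / (ζ + 1)) * B ≤ (2 * lam1 / (ζ + 1)) * (ζ * A) := by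
    have : (2 * lam1 / (ζ + 1)) * (ζ * A) = (2 * ζ * lam1 / (ζ + 1)) * A := by ring
    linarith
  exact le_of_mul_le_mul_left h3 (by positivity)
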